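/- arXiv:2012.02632 — 2 statements merged into one kernel-verified Lean document; each statement's English description precedes it below -/
import Mathlib

section
/- For each d, let x^{(d)} be drawn from the uniform distribution on the cube [-1,1]^d and let r₂(d) = (2/√π)·Γ(d/2 + 1)^{1/d}. Then the probability that ‖x^{(d)}‖₂ ≤ r₂(d) tends to 0 as d → ∞; i.e., a uniform random point of the ℓ∞ unit ball asymptotically almost surely lies outside the Euclidean ball of equal volume. -/
open MeasureTheory ENNReal Filter

/-- The radius for which the Euclidean ball in `ℝ^d` has the same Lebesgue volume as the
`ℓ∞` ball of radius `1`: `r₂(d) = (2/√π) · Γ(d/2 + 1)^(1/d)`. -/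
noncomputable def r2 (d : ℕ) : ℝ :=
  (2 / Real.sqrt Real.pi) * Real.Gamma ((d : ℝ) / 2 + 1) ^ ((1 : ℝ) / d)

/-!
The squared norm of a uniform point of the cube is a sum of `d` independent copies of `U²`, with
`U` uniform on `[-1, 1]`, so by the weak law of large numbers `‖x‖² / d → 1 / 3` in probability.
Stirling's asymptotics give `r₂(d)² / d → 2 / (π e)`, and `2 / (π e) < 1 / 3`.
-/

section Gamma

open Set
open scoped Topology

-- The function `x ^ s * exp (-x * s / (s + 1))` is maximal at `x = s + 1`.
lemma rpow_mul_exp_neg_le {s x : ℝ} (hs : 0 ≤ s) (hx : 0 ≤ x) :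
    x ^ s * Real.exp (-x) ≤
      ((s + 1) / Real.exp 1) ^ s * Real.exp (-(s + 1)⁻¹ * x) := by
  have hx_le : x ≤ (s + 1) / Real.exp 1 * Real.exp (x / (s + 1)) := by
    have := Real.add_one_le_exp (x / (s + 1) - 1)
    rw [sub_add_cancel, Real.exp_sub, div_le_iff₀ (by positivity)] at this
    exact this.trans_eq (by ring)
  have hsplit : x / (s + 1) * s + -x = -(s + 1)⁻¹ * x := by
    field_simp
    ring
  calc x ^ s * Real.exp (-x)
      ≤ ((s + 1) / Real.exp 1 * Real.exp (x / (s + 1))) ^ s * Real.exp (-x) := by gcongr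
    _ = ((s + 1) / Real.exp 1) ^ s * Real.exp (-(s + 1)⁻¹ * x) := by
        rw [Real.mul_rpow (by positivity) (by positivity), ← Real.exp_mul, mul_assoc,
          ← Real.exp_add, hsplit]

lemma Gamma_add_one_le {s : ℝ} (hs : 0 ≤ s) :
    Real.Gamma (s + 1) ≤ (s + 1) * ((s + 1) / Real.exp 1) ^ s := by
  have hneg : -(s + 1)⁻¹ < 0 := by rw [neg_lt_zero]; positivity
  calc Real.Gamma (s + 1) = ∫ x in Ioi 0, Real.exp (-x) * x ^ (s + 1 - 1) :=
        Real.Gamma_eq_integral (by positivity)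
    _ ≤ ∫ x in Ioi 0, ((s + 1) / Real.exp 1) ^ s * Real.exp (-(s + 1)⁻¹ * x) := by
        refine setIntegral_mono_on (Real.GammaIntegral_convergent (by positivity))
          ((integrableOn_exp_mul_Ioi hneg 0).const_mul _) measurableSet_Ioi fun x hx ↦ ?_
        rw [add_sub_cancel_right, mul_comm]
        exact rpow_mul_exp_neg_le hs (mem_Ioi.mp hx).le
    _ = (s + 1) * ((s + 1) / Real.exp 1) ^ s := by
        rw [integral_const_mul, integral_exp_mul_Ioi hneg, mul_zero, Real.exp_zero, neg_div_neg_eq,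
          one_div, inv_inv, mul_comm]

lemma rpow_le_Gamma_add_one {s : ℝ} (hs : 0 ≤ s) :
    (s / Real.exp 1) ^ s ≤ Real.Gamma (s + 1) := by
  have hint := Real.GammaIntegral_convergent (s := s + 1) (by positivity)
  calc (s / Real.exp 1) ^ s = ∫ x in Ioi s, Real.exp (-x) * s ^ s := by
        rw [integral_mul_const, integral_exp_neg_Ioi, Real.div_rpow hs (by positivity),
          Real.exp_one_rpow, Real.exp_neg, div_eq_inv_mul]
    _ ≤ ∫ x in Ioi s, Real.exp (-x) * x ^ (s + 1 - 1) := by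
        refine setIntegral_mono_on ((integrableOn_exp_neg_Ioi s).mul_const _)
          (hint.mono_set (Ioi_subset_Ioi hs)) measurableSet_Ioi fun x hx ↦ ?_
        rw [add_sub_cancel_right]
        gcongr
        exact (mem_Ioi.mp hx).le
    _ ≤ ∫ x in Ioi 0, Real.exp (-x) * x ^ (s + 1 - 1) := by
        refine setIntegral_mono_set hint ?_ (Ioi_subset_Ioi hs).eventuallyLE
        filter_upwards [ae_restrict_mem measurableSet_Ioi] with x hx
        have := mem_Ioi.mp hx
        positivity
    _ = Real.Gamma (s + 1) := (Real.Gamma_eq_integral (by positivity)).symm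

lemma tendsto_Gamma_add_one_rpow_one_div_div :
    Tendsto (fun s : ℝ ↦ Real.Gamma (s + 1) ^ (1 / s) / s) atTop (𝓝 (Real.exp 1)⁻¹) := by
  have hroot : Tendsto (fun s : ℝ ↦ (s + 1) ^ (1 / s)) atTop (𝓝 1) := by
    refine ((tendsto_rpow_div_mul_add 1 1 (-1) zero_ne_one).comp
      (tendsto_atTop_add_const_right _ 1 tendsto_id)).congr fun s ↦ ?_
    simp
  have hratio : Tendsto (fun s : ℝ ↦ 1 + s⁻¹) atTop (𝓝 1) := by
    simpa using tendsto_inv_atTop_zero.const_add (1 : ℝ)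
  have hupper : Tendsto (fun s : ℝ ↦ (s + 1) ^ (1 / s) * (1 + s⁻¹) * (Real.exp 1)⁻¹) atTop
      (𝓝 (Real.exp 1)⁻¹) := by
    simpa using (hroot.mul hratio).mul_const (Real.exp 1)⁻¹
  refine tendsto_of_tendsto_of_tendsto_of_le_of_le' tendsto_const_nhds hupper ?_ ?_
  all_goals filter_upwards [eventually_gt_atTop 0] with s hs
  · calc (Real.exp 1)⁻¹ = ((s / Real.exp 1) ^ s) ^ (1 / s) / s := by
          rw [one_div, Real.rpow_rpow_inv (by positivity) hs.ne']
          field_simp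
      _ ≤ Real.Gamma (s + 1) ^ (1 / s) / s := by
          gcongr
          exact rpow_le_Gamma_add_one hs.le
  · calc Real.Gamma (s + 1) ^ (1 / s) / s
        ≤ ((s + 1) * ((s + 1) / Real.exp 1) ^ s) ^ (1 / s) / s := by
          gcongr
          exact Gamma_add_one_le hs.le
      _ = (s + 1) ^ (1 / s) * (1 + s⁻¹) * (Real.exp 1)⁻¹ := by
          rw [Real.mul_rpow (by positivity) (by positivity), one_div,
            Real.rpow_rpow_inv (by positivity) hs.ne']
          field_simp

lemma tendsto_r2_sq_div :
    Tendsto (fun d : ℕ ↦ r2 d ^ 2 / d) atTop (𝓝 (2 / (Real.pi * Real.exp 1))) := by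
  have hhalf : Tendsto (fun d : ℕ ↦ (d : ℝ) / 2) atTop atTop :=
    tendsto_natCast_atTop_atTop.atTop_div_const two_pos
  have hlim := (tendsto_Gamma_add_one_rpow_one_div_div.comp hhalf).const_mul (2 / Real.pi)
  rw [← div_eq_mul_inv, div_div] at hlim
  refine hlim.congr fun d ↦ ?_
  have hΓ : 0 ≤ Real.Gamma ((d : ℝ) / 2 + 1) := (Real.Gamma_pos_of_pos (by positivity)).le
  have hexp : 1 / ((d : ℝ) / 2) = 1 / d * (2 : ℕ) := by
    push_cast
    ring
  rw [r2, mul_pow, div_pow, Real.sq_sqrt Real.pi_pos.le, ← Real.rpow_mul_natCast hΓ, ← hexp,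
    Function.comp_apply]
  ring

lemma two_div_pi_mul_exp_one_lt_one_third : 2 / (Real.pi * Real.exp 1) < 1 / 3 := by
  rw [div_lt_div_iff₀ (by positivity) three_pos]
  nlinarith [Real.pi_gt_three, Real.exp_one_gt_two]

end Gamma

section WeakLaw

open ProbabilityTheory
open scoped Topology

variable {Ω : Type*} [MeasurableSpace Ω] {μ : Measure Ω} [IsProbabilityMeasure μ] {f : Ω → ℝ}

lemma measure_pi_le_abs_sum_sub_le (ι : Type*) [Fintype ι] (hf : MemLp f 2 μ) {ε : ℝ}
    (hε : 0 < ε) :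
    Measure.pi (fun _ : ι ↦ μ) {x | ε ≤ |∑ i, f (x i) - Fintype.card ι * μ[f]|} ≤
      ENNReal.ofReal (Fintype.card ι * Var[f; μ] / ε ^ 2) := by
  have hcoord (i : ι) : MemLp (fun x : ι → Ω ↦ f (x i)) 2 (Measure.pi fun _ ↦ μ) :=
    hf.comp_measurePreserving (measurePreserving_eval _ i)
  have hmean : ∫ x, ∑ i, f (x i) ∂Measure.pi (fun _ : ι ↦ μ) = Fintype.card ι * μ[f] := by
    rw [integral_finsetSum _ fun i _ ↦ (hcoord i).integrable one_le_two]
    simp [integral_comp_eval (μ := fun _ : ι ↦ μ) hf.1]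
  have hvar : Var[fun x ↦ ∑ i, f (x i); Measure.pi fun _ : ι ↦ μ] =
      Fintype.card ι * Var[f; μ] := by
    have := variance_sum_pi fun _ : ι ↦ hf
    simpa [Finset.sum_fn] using this
  rw [← hmean, ← hvar]
  exact meas_ge_le_variance_div_sq (memLp_finsetSum _ fun i _ ↦ hcoord i) hε

lemma tendsto_measure_pi_sum_le (hf : MemLp f 2 μ) {c : ℝ} (hc : c < μ[f]) :
    Tendsto (fun d : ℕ ↦ Measure.pi (fun _ : Fin d ↦ μ) {x | ∑ i, f (x i) ≤ c * d}) atTop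
      (𝓝 0) := by
  have hgap : 0 < μ[f] - c := sub_pos.mpr hc
  have hbound : Tendsto (fun d : ℕ ↦ ENNReal.ofReal (Var[f; μ] / (μ[f] - c) ^ 2 / d)) atTop
      (𝓝 0) := by
    simpa using ENNReal.tendsto_ofReal (tendsto_const_div_atTop_nhds_zero_nat _)
  refine tendsto_of_tendsto_of_tendsto_of_le_of_le' tendsto_const_nhds hbound
    (Eventually.of_forall fun _ ↦ zero_le) ?_
  filter_upwards [eventually_gt_atTop 0] with d hd
  have hd_pos : (0 : ℝ) < d := Nat.cast_pos.mpr hd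
  calc Measure.pi (fun _ : Fin d ↦ μ) {x | ∑ i, f (x i) ≤ c * d}
      ≤ Measure.pi (fun _ : Fin d ↦ μ)
          {x | d * (μ[f] - c) ≤ |∑ i, f (x i) - Fintype.card (Fin d) * μ[f]|} := by
        refine measure_mono fun x hx ↦ ?_
        rw [Set.mem_ofPred_eq] at hx ⊢
        rw [Fintype.card_fin]
        exact le_abs.mpr (Or.inr (by linarith))
    _ ≤ ENNReal.ofReal (Fintype.card (Fin d) * Var[f; μ] / (d * (μ[f] - c)) ^ 2) :=
        measure_pi_le_abs_sum_sub_le (Fin d) hf (mul_pos hd_pos hgap)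
    _ = ENNReal.ofReal (Var[f; μ] / (μ[f] - c) ^ 2 / d) := by
        rw [Fintype.card_fin]
        congr 1
        field_simp

end WeakLaw

section UniformCube

open ProbabilityTheory Set
open scoped Topology

lemma pi_cond {ι : Type*} [Fintype ι] {Ω : ι → Type*} [∀ i, MeasurableSpace (Ω i)]
    (μ : ∀ i, Measure (Ω i)) [∀ i, SigmaFinite (μ i)] {s : ∀ i, Set (Ω i)}
    (h_zero : ∀ i, μ i (s i) ≠ 0) (h_top : ∀ i, μ i (s i) ≠ ∞) :
    Measure.pi (fun i ↦ (μ i)[|s i]) = (Measure.pi μ)[|univ.pi s] := by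
  have (i : ι) : IsProbabilityMeasure ((μ i)[|s i]) :=
    cond_isProbabilityMeasure_of_finite (h_zero i) (h_top i)
  refine Measure.pi_eq fun t ht ↦ ?_
  rw [cond_apply' (.univ_pi ht), ← pi_inter_distrib, Measure.pi_pi, Measure.pi_pi,
    ENNReal.prod_inv_distrib fun i _ j _ _ ↦ Or.inl (h_zero i), ← Finset.prod_mul_distrib]
  exact Finset.prod_congr rfl fun i _ ↦ (cond_apply' (ht i) _).symm

lemma integral_cond_Icc {E : Type*} [NormedAddCommGroup E] [NormedSpace ℝ E] {a b : ℝ}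
    (hab : a ≤ b) (f : ℝ → E) :
    ∫ x, f x ∂volume[|Icc a b] = (b - a)⁻¹ • ∫ x in a..b, f x := by
  rw [ProbabilityTheory.cond, integral_smul_measure, integral_Icc_eq_integral_Ioc,
    intervalIntegral.integral_of_le hab, Real.volume_Icc, ENNReal.toReal_inv,
    ENNReal.toReal_ofReal (sub_nonneg.mpr hab)]

instance isProbabilityMeasure_cond_Icc_neg_one_one :
    IsProbabilityMeasure (volume[|Icc (-1 : ℝ) 1]) :=
  cond_isProbabilityMeasure_of_finite (by simp) (by simp)

lemma smul_restrict_cube_eq_map_pi (ι : Type*) [Fintype ι] :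
    ((2 : ℝ≥0∞) ^ Fintype.card ι)⁻¹ •
        volume.restrict {x : EuclideanSpace ℝ ι | ∀ i, |x i| ≤ 1} =
      (Measure.pi fun _ : ι ↦ volume[|Icc (-1 : ℝ) 1]).map (WithLp.toLp 2) := by
  have hcube : WithLp.toLp 2 ⁻¹' {x : EuclideanSpace ℝ ι | ∀ i, |x i| ≤ 1} =
      univ.pi fun _ ↦ Icc (-1) 1 := by
    ext x
    simp [abs_le, Pi.le_def, forall_and]
  have hvol : volume (univ.pi fun _ : ι ↦ Icc (-1 : ℝ) 1) = 2 ^ Fintype.card ι := by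
    rw [volume_pi_pi]
    norm_num
  rw [pi_cond _ (by simp) (by simp), ProbabilityTheory.cond, ← volume_pi, hvol, Measure.map_smul,
    ← hcube, ((PiLp.volume_preserving_toLp ι).restrict_preimage_emb
      (MeasurableEquiv.toLp 2 (ι → ℝ)).measurableEmbedding _).map_eq]

lemma tendsto_measure_cube_norm_sq_le {c : ℝ} (hc : c < 1 / 3) :
    Tendsto (fun d : ℕ ↦
      (((2 : ℝ≥0∞) ^ d)⁻¹ • volume.restrict {x : EuclideanSpace ℝ (Fin d) | ∀ i, |x i| ≤ 1})
        {x | ‖x‖ ^ 2 ≤ c * d}) atTop (𝓝 0) := by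
  have hmean : ∫ x : ℝ, x ^ 2 ∂volume[|Icc (-1) 1] = 1 / 3 := by
    rw [integral_cond_Icc (by norm_num), integral_pow]
    norm_num
  have hmemLp : MemLp (fun x : ℝ ↦ x ^ 2) 2 (volume[|Icc (-1) 1]) := by
    refine .of_bound (by fun_prop) 1 ?_
    filter_upwards [ae_cond_mem measurableSet_Icc] with x hx
    simpa using abs_le.mpr hx
  refine (tendsto_measure_pi_sum_le hmemLp (hc.trans_eq hmean.symm)).congr fun d ↦ ?_
  have hsmul := smul_restrict_cube_eq_map_pi (Fin d)
  rw [Fintype.card_fin] at hsmul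
  rw [hsmul, Measure.map_apply (by fun_prop) (measurableSet_le (by fun_prop) (by fun_prop))]
  simp [EuclideanSpace.norm_sq_eq]

end UniformCube

/-- For `x⁽ᵈ⁾` drawn from the uniform distribution on the cube `[-1,1]^d`
(Lebesgue measure restricted to the cube, divided by `2^d`), the probability that
`‖x⁽ᵈ⁾‖₂ ≤ r₂(d)` tends to `0` as `d → ∞`. -/
theorem uniform_cube_prob_in_equal_volume_euclidean_ball_tendsto_zero :
    Tendsto (fun d : ℕ =>
      (((2 : ℝ≥0∞) ^ d)⁻¹
          • volume.restrict {x : EuclideanSpace ℝ (Fin d) | ∀ i, |x i| ≤ 1})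
          {x : EuclideanSpace ℝ (Fin d) | ‖x‖ ≤ r2 d})
      atTop (nhds 0) := by
  obtain ⟨c, hc_gt, hc_lt⟩ := exists_between two_div_pi_mul_exp_one_lt_one_third
  refine tendsto_of_tendsto_of_tendsto_of_le_of_le' tendsto_const_nhds
    (tendsto_measure_cube_norm_sq_le hc_lt) (Eventually.of_forall fun _ ↦ zero_le) ?_
  filter_upwards [tendsto_r2_sq_div.eventually_le_const hc_gt, eventually_gt_atTop 0] with d hd hpos
  have hr2 : r2 d ^ 2 ≤ c * d := (div_le_iff₀ (mod_cast hpos)).mp hd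
  refine measure_mono fun x (hx : ‖x‖ ≤ r2 d) ↦ ?_
  exact (pow_le_pow_left₀ (norm_nonneg x) hx 2).trans hr2
end

section
/- Fix 1 ≤ p < q ≤ ∞ with p ≠ q. For every dimension d, let ε_d, ε'_d > 0 be chosen so that the Lebesgue volume of the ℓ_p ball B_{p,d}(ε_d) equals the Lebesgue volume of the ℓ_q ball B_{q,d}(ε'_d). Then the ratio Vol(B_{p,d}(ε_d) ∩ B_{q,d}(ε'_d)) / Vol(B_{q,d}(ε'_d)) tends to 0 as d → ∞. -/
open MeasureTheory ENNReal Filter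

/-! The `ℓ_p` ball in `ℝ^d` of volume about `1` is a typical set for the product of `d` copies of
the density `f_p(t) = exp (1/p - (c |t|)^p)` on `ℝ` (the indicator of `[-1/2, 1/2]` if `p = ∞`):
that product is at least `1` on the ball, and the volume of the ball is at most `1` and decays
slower than any exponential. As `f_p 0 = exp (1/p)`, distinct exponents give distinct densities, so
the Hellinger affinity `ρ = ∫ √(f_p f_q)` is less than `1`. On the intersection of the two typical
balls the product of the values of `√(f_p f_q)` is still at least `1`, hence the intersection has
volume at most `ρ^d`. Prescribed radii only dilate the typical balls, and comparing volumes bounds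
the ratio of the two factors subexponentially. -/

open scoped Pointwise Topology

section ProductDensity

/-- The Chernoff bound: `∏ i, h (x i)` dominates the indicator of `S`. -/
lemma measure_pi_le_integral_pow {ι α : Type*} [Fintype ι] {mα : MeasurableSpace α}
    {μ : Measure α} [SigmaFinite μ] {h : α → ℝ} (h_nonneg : ∀ t, 0 ≤ h t) (h_int : Integrable h μ)
    {S : Set (ι → α)} (hS : ∀ x ∈ S, 1 ≤ ∏ i, h (x i)) :
    Measure.pi (fun _ => μ) S ≤ ENNReal.ofReal ((∫ t, h t ∂μ) ^ Fintype.card ι) := by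
  have prod_int : Integrable (fun x : ι → α => ∏ i, h (x i)) (Measure.pi fun _ => μ) :=
    Integrable.fintype_prod fun _ => h_int
  rw [← integral_fintype_prod_eq_pow, ofReal_integral_eq_lintegral_ofReal prod_int
    (Eventually.of_forall fun x => Finset.prod_nonneg fun i _ => h_nonneg _)]
  refine meas_le_lintegral₀ prod_int.aestronglyMeasurable.aemeasurable.ennreal_ofReal fun x hx => ?_
  exact one_le_ofReal.2 (hS x hx)

lemma integrable_sqrt_mul {α : Type*} {mα : MeasurableSpace α} {μ : Measure α} {f g : α → ℝ}
    (f_nonneg : ∀ t, 0 ≤ f t) (g_nonneg : ∀ t, 0 ≤ g t) (f_int : Integrable f μ)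
    (g_int : Integrable g μ) : Integrable (fun t => √(f t * g t)) μ := by
  have meas : AEStronglyMeasurable (fun t => √(f t * g t)) μ :=
    Real.continuous_sqrt.comp_aestronglyMeasurable
      (f_int.aestronglyMeasurable.mul g_int.aestronglyMeasurable)
  refine (f_int.add g_int).mono' meas (Eventually.of_forall fun t => ?_)
  rw [Real.norm_of_nonneg (Real.sqrt_nonneg _), Pi.add_apply]
  refine Real.sqrt_le_iff.2 ⟨add_nonneg (f_nonneg t) (g_nonneg t), ?_⟩
  nlinarith [f_nonneg t, g_nonneg t, mul_nonneg (f_nonneg t) (g_nonneg t)]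

/-- The defect `1 - ∫ √(f g)` is half of the integral of `(√f - √g)²`. -/
lemma integral_sqrt_mul_lt_one {α : Type*} {mα : MeasurableSpace α} {μ : Measure α} {f g : α → ℝ}
    (f_nonneg : ∀ t, 0 ≤ f t) (g_nonneg : ∀ t, 0 ≤ g t) (f_one : ∫ t, f t ∂μ = 1)
    (g_one : ∫ t, g t ∂μ = 1) (hfg : ¬ f =ᵐ[μ] g) : ∫ t, √(f t * g t) ∂μ < 1 := by
  have f_int : Integrable f μ := .of_integral_ne_zero (f_one ▸ one_ne_zero)
  have g_int : Integrable g μ := .of_integral_ne_zero (g_one ▸ one_ne_zero)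
  have s_int := integrable_sqrt_mul f_nonneg g_nonneg f_int g_int
  have sq_eq (t : α) : (√(f t) - √(g t)) ^ 2 = f t + g t - 2 * √(f t * g t) := by
    rw [Real.sqrt_mul (f_nonneg t), sub_sq, Real.sq_sqrt (f_nonneg t), Real.sq_sqrt (g_nonneg t)]
    ring
  have sq_int : Integrable (fun t => (√(f t) - √(g t)) ^ 2) μ := by
    simp only [sq_eq]
    exact (f_int.add g_int).sub (s_int.const_mul 2)
  have integral_sq : ∫ t, (√(f t) - √(g t)) ^ 2 ∂μ = 2 - 2 * ∫ t, √(f t * g t) ∂μ := by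
    simp only [sq_eq]
    rw [integral_sub (f := fun t => f t + g t) (f_int.add g_int) (s_int.const_mul 2),
      integral_add f_int g_int, f_one, g_one, integral_const_mul, one_add_one_eq_two]
  have integral_sq_ne : ∫ t, (√(f t) - √(g t)) ^ 2 ∂μ ≠ 0 := by
    rw [Ne, integral_eq_zero_iff_of_nonneg (fun t => sq_nonneg _) sq_int]
    refine fun h => hfg (h.mono fun t ht => ?_)
    exact (Real.sqrt_inj (f_nonneg t) (g_nonneg t)).1 (sub_eq_zero.1 (sq_eq_zero_iff.1 ht))
  have integral_sq_pos : 0 < ∫ t, (√(f t) - √(g t)) ^ 2 ∂μ :=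
    (integral_nonneg fun t => sq_nonneg _).lt_of_ne' integral_sq_ne
  linarith

lemma not_ae_eq_of_continuousAt {X Y : Type*} [TopologicalSpace X] [MeasurableSpace X]
    {μ : Measure X} [μ.IsOpenPosMeasure] [TopologicalSpace Y] [T2Space Y] {f g : X → Y} {x : X}
    (hf : ContinuousAt f x) (hg : ContinuousAt g x) (hne : f x ≠ g x) : ¬ f =ᵐ[μ] g := by
  intro hfg
  obtain ⟨y, hy_ne, hy_eq⟩ :=
    mem_closure_iff_nhds.1 (Measure.dense_of_ae hfg x) _ ((hf.ne_iff_eventually_ne hg).1 hne)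
  exact hy_ne hy_eq

end ProductDensity

section Dilation

variable {E : Type*} [NormedAddCommGroup E] [NormedSpace ℝ E] [FiniteDimensional ℝ E]
  [MeasurableSpace E] [BorelSpace E] {μ : Measure E} [μ.IsAddHaarMeasure]

lemma le_div_of_measure_smul_le [Nontrivial E] {A B : Set E} {a b κ : ℝ} (ha : 0 ≤ a) (hb : 0 ≤ b)
    (hκ : 0 < κ) (hA : ENNReal.ofReal (κ ^ Module.finrank ℝ E) ≤ μ A) (hB : μ B ≤ 1)
    (hAB : μ (a • A) ≤ μ (b • B)) : a ≤ b / κ := by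
  set n := Module.finrank ℝ E
  have hn : n ≠ 0 := Module.finrank_pos.ne'
  have pow_le : ENNReal.ofReal ((a * κ) ^ n) ≤ ENNReal.ofReal (b ^ n) := calc
    ENNReal.ofReal ((a * κ) ^ n) = ENNReal.ofReal (a ^ n) * ENNReal.ofReal (κ ^ n) := by
      rw [mul_pow, ENNReal.ofReal_mul (by positivity)]
    _ ≤ ENNReal.ofReal (a ^ n) * μ A := by gcongr
    _ = μ (a • A) := (Measure.addHaar_smul_of_nonneg μ ha A).symm
    _ ≤ μ (b • B) := hAB
    _ = ENNReal.ofReal (b ^ n) * μ B := Measure.addHaar_smul_of_nonneg μ hb B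
    _ ≤ ENNReal.ofReal (b ^ n) := mul_le_of_le_one_right' hB
  rw [ENNReal.ofReal_le_ofReal_iff (by positivity), pow_le_pow_iff_left₀ (by positivity) hb hn]
    at pow_le
  rwa [le_div_iff₀ hκ]

/-- By `le_div_of_measure_smul_le`, both dilates lie in dilates by the common factor `b / κ`. -/
lemma measure_smul_inter_smul_div_le [Nontrivial E] {A B : Set E} (hA : Balanced ℝ A)
    (hB : Balanced ℝ B) {a b κ ρ : ℝ} (ha : 0 ≤ a) (hb : 0 < b) (hκ : 0 < κ)
    (hκA : ENNReal.ofReal (κ ^ Module.finrank ℝ E) ≤ μ A)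
    (hκB : ENNReal.ofReal (κ ^ Module.finrank ℝ E) ≤ μ B) (hB_le : μ B ≤ 1)
    (hρ : μ (A ∩ B) ≤ ENNReal.ofReal (ρ ^ Module.finrank ℝ E)) (hAB : μ (a • A) ≤ μ (b • B)) :
    μ (a • A ∩ b • B) / μ (b • B) ≤ ENNReal.ofReal ((ρ / κ ^ 2) ^ Module.finrank ℝ E) := by
  set n := Module.finrank ℝ E
  have a_le : a ≤ b / κ := le_div_of_measure_smul_le ha hb.le hκ hκA hB_le hAB
  have b_le : b ≤ b / κ := le_div_of_measure_smul_le hb.le hb.le hκ hκB hB_le le_rfl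
  have subset : a • A ∩ b • B ⊆ (b / κ) • (A ∩ B) := by
    rw [Set.smul_set_inter₀ (by positivity)]
    exact Set.inter_subset_inter (hA.smul_mono (abs_le_abs_of_nonneg ha a_le))
      (hB.smul_mono (abs_le_abs_of_nonneg hb.le b_le))
  have inter_le : μ (a • A ∩ b • B) ≤ ENNReal.ofReal ((b / κ) ^ n * ρ ^ n) := calc
    μ (a • A ∩ b • B) ≤ μ ((b / κ) • (A ∩ B)) := measure_mono subset
    _ = ENNReal.ofReal ((b / κ) ^ n) * μ (A ∩ B) :=
      Measure.addHaar_smul_of_nonneg μ (by positivity) _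
    _ ≤ ENNReal.ofReal ((b / κ) ^ n * ρ ^ n) := by
      rw [ENNReal.ofReal_mul (by positivity)]
      gcongr
  have le_smul : ENNReal.ofReal (b ^ n * κ ^ n) ≤ μ (b • B) := by
    rw [Measure.addHaar_smul_of_nonneg μ hb.le, ENNReal.ofReal_mul (by positivity)]
    gcongr
  calc μ (a • A ∩ b • B) / μ (b • B)
    _ ≤ ENNReal.ofReal ((b / κ) ^ n * ρ ^ n) / ENNReal.ofReal (b ^ n * κ ^ n) :=
      ENNReal.div_le_div inter_le le_smul
    _ = ENNReal.ofReal ((ρ / κ ^ 2) ^ n) := by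
      rw [← ENNReal.ofReal_div_of_pos (by positivity)]
      congr 1
      simp only [div_pow]
      field_simp
      ring

end Dilation

/-- The sets `A d ⊆ ℝ^d` are balanced typical sets of the products of a probability density `f` on
`ℝ` of entropy zero: those products are at least `1` on `A d`, so `A d` has volume at most `1`, and
the volume of `A d` is subexponentially close to `1`. -/
structure IsTypicalFamily (f : ℝ → ℝ) (A : ∀ d : ℕ, Set (Fin d → ℝ)) : Prop where
  nonneg : ∀ t, 0 ≤ f t
  integral_eq_one : ∫ t, f t = 1
  balanced : ∀ d, Balanced ℝ (A d)
  one_le_prod : ∀ d, ∀ x ∈ A d, 1 ≤ ∏ i, f (x i)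
  eventually_pow_le_volume : ∀ κ : ℝ, 0 < κ → κ < 1 →
    ∀ᶠ d in atTop, ENNReal.ofReal (κ ^ d) ≤ volume (A d)

namespace IsTypicalFamily

variable {f g : ℝ → ℝ} {A B : ∀ d : ℕ, Set (Fin d → ℝ)}

lemma integrable (hA : IsTypicalFamily f A) : Integrable f :=
  .of_integral_ne_zero (hA.integral_eq_one ▸ one_ne_zero)

lemma volume_le_one (hA : IsTypicalFamily f A) (d : ℕ) : volume (A d) ≤ 1 := by
  simpa [hA.integral_eq_one, volume_pi] using
    measure_pi_le_integral_pow hA.nonneg hA.integrable (hA.one_le_prod d)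

lemma volume_inter_le (hA : IsTypicalFamily f A) (hB : IsTypicalFamily g B) (d : ℕ) :
    volume (A d ∩ B d) ≤ ENNReal.ofReal ((∫ t, √(f t * g t)) ^ d) := by
  have one_le_prod (x : Fin d → ℝ) (hx : x ∈ A d ∩ B d) : 1 ≤ ∏ i, √(f (x i) * g (x i)) := by
    rw [← Real.sqrt_prod _ fun i _ => mul_nonneg (hA.nonneg _) (hB.nonneg _), Real.one_le_sqrt,
      Finset.prod_mul_distrib]
    exact one_le_mul_of_one_le_of_one_le (hA.one_le_prod d x hx.1) (hB.one_le_prod d x hx.2)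
  simpa [volume_pi] using measure_pi_le_integral_pow (fun t => Real.sqrt_nonneg _)
    (integrable_sqrt_mul hA.nonneg hB.nonneg hA.integrable hB.integrable) one_le_prod

theorem tendsto_volume_smul_inter_smul_div (hA : IsTypicalFamily f A) (hB : IsTypicalFamily g B)
    (hfg : ¬ f =ᵐ[volume] g) {a b : ℕ → ℝ} (ha : ∀ᶠ d in atTop, 0 ≤ a d)
    (hb : ∀ᶠ d in atTop, 0 < b d)
    (hab : ∀ᶠ d in atTop, volume (a d • A d) ≤ volume (b d • B d)) :
    Tendsto (fun d => volume (a d • A d ∩ b d • B d) / volume (b d • B d)) atTop (𝓝 0) := by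
  set ρ := ∫ t, √(f t * g t)
  have : 0 ≤ ρ := integral_nonneg fun t => Real.sqrt_nonneg _
  have ρ_lt_one : ρ < 1 := integral_sqrt_mul_lt_one hA.nonneg hB.nonneg hA.integral_eq_one
    hB.integral_eq_one hfg
  obtain ⟨κ, hρκ, κ_lt_one⟩ : ∃ κ, √ρ < κ ∧ κ < 1 :=
    exists_between (by rwa [Real.sqrt_lt' one_pos, one_pow])
  have κ_pos : 0 < κ := (Real.sqrt_nonneg ρ).trans_lt hρκ
  have ratio_lt_one : ρ / κ ^ 2 < 1 := by
    rwa [div_lt_one (by positivity), ← Real.sqrt_lt' κ_pos]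
  have geometric : Tendsto (fun d => ENNReal.ofReal ((ρ / κ ^ 2) ^ d)) atTop (𝓝 0) := by
    simpa using ENNReal.tendsto_ofReal
      (tendsto_pow_atTop_nhds_zero_of_lt_one (by positivity) ratio_lt_one)
  refine tendsto_of_tendsto_of_tendsto_of_le_of_le' tendsto_const_nhds geometric
    (Eventually.of_forall fun _ => zero_le) ?_
  filter_upwards [ha, hb, hab, hA.eventually_pow_le_volume κ κ_pos κ_lt_one,
    hB.eventually_pow_le_volume κ κ_pos κ_lt_one, eventually_ne_atTop 0]
    with d had hbd habd hκA hκB hd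
  have : NeZero d := ⟨hd⟩
  simpa using measure_smul_inter_smul_div_le (hA.balanced d) (hB.balanced d) had hbd κ_pos
    (by simpa using hκA) (by simpa using hκB) (hB.volume_le_one d)
    (by simpa using hA.volume_inter_le hB d) habd

end IsTypicalFamily

section Gamma

/-- The maximum of `t ↦ t ^ x * exp (-θ t)` is attained at `t = x / θ`. -/
lemma rpow_mul_exp_neg_mul_le {t x θ : ℝ} (ht : 0 ≤ t) (hx : 0 < x) (hθ : 0 < θ) :
    t ^ x * Real.exp (-(θ * t)) ≤ (x / (θ * Real.exp 1)) ^ x := by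
  have tangent : θ * t / x ≤ Real.exp (θ * t / x - 1) := by
    linarith [Real.add_one_le_exp (θ * t / x - 1)]
  have le_exp : t * Real.exp (-(θ * t / x)) ≤ x / (θ * Real.exp 1) := by
    rw [Real.exp_sub] at tangent
    rw [Real.exp_neg]
    field_simp at tangent ⊢
    linarith
  calc t ^ x * Real.exp (-(θ * t)) = (t * Real.exp (-(θ * t / x))) ^ x := by
        rw [Real.mul_rpow ht (Real.exp_pos _).le, ← Real.exp_mul]
        congr 2
        field_simp
    _ ≤ (x / (θ * Real.exp 1)) ^ x := by gcongr

lemma Gamma_add_one_le_s8 {x θ : ℝ} (hx : 0 < x) (hθ₀ : 0 < θ) (hθ₁ : θ < 1) :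
    Real.Gamma (x + 1) ≤ (x / (θ * Real.exp 1)) ^ x * (1 - θ)⁻¹ := by
  have hθ : -(1 - θ) < 0 := by linarith
  have integrand_le : ∀ t ∈ Set.Ioi (0 : ℝ), Real.exp (-t) * t ^ (x + 1 - 1) ≤
      (x / (θ * Real.exp 1)) ^ x * Real.exp (-(1 - θ) * t) := fun t ht => calc
    Real.exp (-t) * t ^ (x + 1 - 1) = t ^ x * Real.exp (-(θ * t)) * Real.exp (-(1 - θ) * t) := by
      rw [add_sub_cancel_right, mul_assoc, ← Real.exp_add, mul_comm]
      ring_nf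
    _ ≤ (x / (θ * Real.exp 1)) ^ x * Real.exp (-(1 - θ) * t) := by
      gcongr
      exact rpow_mul_exp_neg_mul_le (le_of_lt ht) hx hθ₀
  calc Real.Gamma (x + 1)
      = ∫ t in Set.Ioi 0, Real.exp (-t) * t ^ (x + 1 - 1) := Real.Gamma_eq_integral (by linarith)
    _ ≤ ∫ t in Set.Ioi 0, (x / (θ * Real.exp 1)) ^ x * Real.exp (-(1 - θ) * t) :=
      setIntegral_mono_on (Real.GammaIntegral_convergent (by linarith))
        ((integrableOn_exp_mul_Ioi hθ 0).const_mul _) measurableSet_Ioi integrand_le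
    _ = (x / (θ * Real.exp 1)) ^ x * (1 - θ)⁻¹ := by
      rw [integral_const_mul, integral_exp_mul_Ioi hθ, mul_zero, Real.exp_zero, neg_div_neg_eq,
        one_div]

lemma eventually_Gamma_add_one_le {θ : ℝ} (hθ₀ : 0 < θ) (hθ₁ : θ < 1) :
    ∀ᶠ x in atTop, Real.Gamma (x + 1) ≤ (x / (θ * Real.exp 1)) ^ x := by
  have sqrt_lt_one : √θ < 1 := by rwa [Real.sqrt_lt' one_pos, one_pow]
  have sqrt_pos : 0 < √θ := Real.sqrt_pos.2 hθ₀
  have rpow_tendsto := tendsto_rpow_atTop_of_base_lt_one (√θ) (by linarith) sqrt_lt_one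
  filter_upwards [rpow_tendsto.eventually_le_const (sub_pos.2 sqrt_lt_one), eventually_gt_atTop 0]
    with x hx x_pos
  have base_eq : x / (√θ * Real.exp 1) = x / (θ * Real.exp 1) * √θ := by
    nth_rw 2 [← Real.mul_self_sqrt hθ₀.le]
    field_simp
  calc Real.Gamma (x + 1) ≤ (x / (√θ * Real.exp 1)) ^ x * (1 - √θ)⁻¹ :=
        Gamma_add_one_le_s8 x_pos sqrt_pos sqrt_lt_one
    _ = (x / (θ * Real.exp 1)) ^ x * (√θ ^ x / (1 - √θ)) := by
      rw [base_eq, Real.mul_rpow (by positivity) sqrt_pos.le]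
      ring
    _ ≤ (x / (θ * Real.exp 1)) ^ x :=
      mul_le_of_le_one_right (by positivity) (div_le_one_of_le₀ hx (sub_pos.2 sqrt_lt_one).le)

end Gamma

/-- The closed `ℓ_p` ball of radius `r` around the origin, as a subset of `ι → ℝ`, where Lebesgue
measure lives. -/
def lpBall (p : ℝ≥0∞) (ι : Type*) [Fintype ι] (r : ℝ) : Set (ι → ℝ) :=
  {x | ‖WithLp.toLp p x‖ ≤ r}

section LpBall

variable {p : ℝ≥0∞} {ι : Type*} [Fintype ι]

lemma balanced_lpBall [Fact (1 ≤ p)] (r : ℝ) : Balanced ℝ (lpBall p ι r) := by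
  refine balanced_iff_smul_mem.2 fun c hc x hx => ?_
  rw [lpBall, Set.mem_ofPred_eq, WithLp.toLp_smul, norm_smul]
  exact (mul_le_of_le_one_left (norm_nonneg _) hc).trans hx

lemma lpBall_mul [Fact (1 ≤ p)] {c : ℝ} (hc : 0 < c) (r : ℝ) :
    lpBall p ι (c * r) = c • lpBall p ι r := by
  ext x
  rw [Set.mem_smul_set_iff_inv_smul_mem₀ hc.ne', lpBall, lpBall, Set.mem_ofPred_eq,
    Set.mem_ofPred_eq, WithLp.toLp_smul, norm_smul, Real.norm_of_nonneg (by positivity),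
    inv_mul_le_iff₀ hc]

lemma lpBall_top {r : ℝ} (hr : 0 ≤ r) :
    lpBall ∞ ι r = Set.Icc (fun _ => -r) (fun _ => r) := by
  ext x
  rw [lpBall, Set.mem_ofPred_eq, PiLp.norm_toLp, pi_norm_le_iff_of_nonneg hr]
  simp only [Real.norm_eq_abs, abs_le, Set.mem_Icc, Pi.le_def, forall_and]

lemma lpBall_eq_setOf_sum_rpow (hp : 0 < p.toReal) (r : ℝ) :
    lpBall p ι r = {x | (∑ i, |x i| ^ p.toReal) ^ (1 / p.toReal) ≤ r} := by
  ext x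
  rw [lpBall, Set.mem_ofPred_eq, PiLp.norm_eq_sum hp]
  rfl

lemma sum_abs_rpow_le_of_mem_lpBall (hp : 0 < p.toReal) {r : ℝ} {x : ι → ℝ}
    (hx : x ∈ lpBall p ι r) : ∑ i, |x i| ^ p.toReal ≤ r ^ p.toReal := by
  rw [lpBall_eq_setOf_sum_rpow hp, Set.mem_ofPred_eq, one_div] at hx
  have sum_nonneg : 0 ≤ ∑ i, |x i| ^ p.toReal := by positivity
  exact (Real.rpow_inv_le_iff_of_pos sum_nonneg ((by positivity : (0 : ℝ) ≤ _).trans hx)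
    hp).1 hx

end LpBall

/-- The scale `c` for which `t ↦ exp (1/P - (c |t|)^P)` has integral `1`. -/
noncomputable def lpScale (P : ℝ) : ℝ := 2 * Real.Gamma (1 / P + 1) * Real.exp (1 / P)

/-- The maximum entropy density with prescribed `P`-th moment, scaled so that its entropy is `0`. -/
noncomputable def lpDensity (P t : ℝ) : ℝ := Real.exp (1 / P - (lpScale P * |t|) ^ P)

/-- The radius `r` for which `lpDensity P` has product `1` on the `ℓ_P` sphere of radius `r` in
`ℝ^d`. -/
noncomputable def lpRadius (P : ℝ) (d : ℕ) : ℝ := (d / P) ^ (1 / P) / lpScale P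

section LpDensity

variable {P : ℝ}

lemma lpScale_pos (hP : 0 < P) : 0 < lpScale P := by
  have := Real.Gamma_pos_of_pos (show 0 < 1 / P + 1 by positivity)
  unfold lpScale
  positivity

lemma lpRadius_pos (hP : 0 < P) {d : ℕ} (hd : d ≠ 0) : 0 < lpRadius P d := by
  have := lpScale_pos hP
  have : 0 < (d : ℝ) := by positivity
  unfold lpRadius
  positivity

lemma lpDensity_zero (hP : P ≠ 0) : lpDensity P 0 = Real.exp (1 / P) := by
  simp [lpDensity, Real.zero_rpow hP]

lemma continuous_lpDensity (hP : 0 ≤ P) : Continuous (lpDensity P) :=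
  (continuous_const.sub ((continuous_const.mul continuous_abs).rpow_const
    fun _ => Or.inr hP)).rexp

lemma integral_lpDensity (hP : 0 < P) : ∫ t, lpDensity P t = 1 := by
  have scale_pos := lpScale_pos hP
  have := Real.Gamma_pos_of_pos (show 0 < 1 / P + 1 by positivity)
  have density_eq (t : ℝ) :
      lpDensity P t = Real.exp (1 / P) * Real.exp (-lpScale P ^ P * |t| ^ P) := by
    rw [lpDensity, Real.mul_rpow scale_pos.le (abs_nonneg t), ← Real.exp_add]
    ring_nf
  calc ∫ t, lpDensity P t
      = Real.exp (1 / P) * (2 * ((lpScale P)⁻¹ * Real.Gamma (1 / P + 1))) := by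
        simp only [density_eq]
        rw [integral_const_mul,
          integral_comp_abs (f := fun t => Real.exp (-lpScale P ^ P * t ^ P)),
          integral_exp_neg_mul_rpow hP (by positivity), ← Real.rpow_mul scale_pos.le,
          mul_div_cancel₀ _ hP.ne', Real.rpow_neg_one]
    _ = 1 := by
      rw [lpScale]
      field_simp

lemma lpScale_mul_lpRadius_rpow (hP : 0 < P) (d : ℕ) :
    (lpScale P * lpRadius P d) ^ P = d / P := by
  rw [lpRadius, mul_div_cancel₀ _ (lpScale_pos hP).ne', ← Real.rpow_mul (by positivity),
    one_div_mul_cancel hP.ne', Real.rpow_one]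

lemma one_le_prod_lpDensity {p : ℝ≥0∞} (hp : 0 < p.toReal) {d : ℕ} {x : Fin d → ℝ}
    (hx : x ∈ lpBall p (Fin d) (lpRadius p.toReal d)) : 1 ≤ ∏ i, lpDensity p.toReal (x i) := by
  have scale_pos := lpScale_pos hp
  have sum_le : ∑ i, (lpScale p.toReal * |x i|) ^ p.toReal ≤ d / p.toReal := calc
    ∑ i, (lpScale p.toReal * |x i|) ^ p.toReal
      = lpScale p.toReal ^ p.toReal * ∑ i, |x i| ^ p.toReal := by
        simp only [Real.mul_rpow scale_pos.le (abs_nonneg _), Finset.mul_sum]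
    _ ≤ lpScale p.toReal ^ p.toReal * lpRadius p.toReal d ^ p.toReal := by
      gcongr
      exact sum_abs_rpow_le_of_mem_lpBall hp hx
    _ = d / p.toReal := by
      rw [← Real.mul_rpow scale_pos.le (by unfold lpRadius; positivity),
        lpScale_mul_lpRadius_rpow hp]
  simp only [lpDensity]
  rw [← Real.exp_sum, Real.one_le_exp_iff, Finset.sum_sub_distrib, Finset.sum_const,
    Finset.card_univ, Fintype.card_fin, nsmul_eq_mul, mul_one_div]
  exact sub_nonneg.2 sum_le

lemma lpRadius_mul_Gamma_pow (hP : 0 < P) (d : ℕ) :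
    (lpRadius P d * (2 * Real.Gamma (1 / P + 1))) ^ d = (d / P / Real.exp 1) ^ (d / P : ℝ) := by
  have := Real.Gamma_pos_of_pos (show 0 < 1 / P + 1 by positivity)
  have base_eq : lpRadius P d * (2 * Real.Gamma (1 / P + 1)) = (d / P / Real.exp 1) ^ (1 / P) := by
    rw [lpRadius, lpScale, Real.div_rpow (by positivity) (Real.exp_pos 1).le, Real.exp_one_rpow]
    field_simp
  rw [base_eq, ← Real.rpow_mul_natCast (by positivity), one_div_mul_eq_div]

lemma volume_lpBall_lpRadius {p : ℝ≥0∞} (hp : 1 ≤ p.toReal) {d : ℕ} (hd : d ≠ 0) :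
    volume (lpBall p (Fin d) (lpRadius p.toReal d)) = ENNReal.ofReal
      ((d / p.toReal / Real.exp 1) ^ (d / p.toReal) / Real.Gamma (d / p.toReal + 1)) := by
  have hP : 0 < p.toReal := one_pos.trans_le hp
  have radius_pos := lpRadius_pos hP hd
  have : NeZero d := ⟨hd⟩
  rw [lpBall_eq_setOf_sum_rpow hP, volume_sum_rpow_le _ hp, Fintype.card_fin,
    ← ENNReal.ofReal_pow radius_pos.le, ← ENNReal.ofReal_mul (by positivity),
    ← lpRadius_mul_Gamma_pow hP, mul_pow (lpRadius _ _), mul_div_assoc]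

lemma eventually_pow_le_volume_lpBall {p : ℝ≥0∞} (hp : 1 ≤ p.toReal) {κ : ℝ}
    (hκ₀ : 0 < κ) (hκ₁ : κ < 1) :
    ∀ᶠ d : ℕ in atTop,
      ENNReal.ofReal (κ ^ d) ≤ volume (lpBall p (Fin d) (lpRadius p.toReal d)) := by
  have hP : 0 < p.toReal := one_pos.trans_le hp
  have Gamma_le := (tendsto_natCast_atTop_atTop.atTop_div_const hP).eventually
    (eventually_Gamma_add_one_le (Real.rpow_pos_of_pos hκ₀ _) (Real.rpow_lt_one hκ₀.le hκ₁ hP))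
  filter_upwards [Gamma_le, eventually_ne_atTop 0] with d hd d_ne
  have rpow_eq : (κ ^ p.toReal) ^ (d / p.toReal) = κ ^ d := by
    rw [← Real.rpow_mul hκ₀.le, mul_div_cancel₀ _ hP.ne', Real.rpow_natCast]
  rw [volume_lpBall_lpRadius hp d_ne]
  refine ENNReal.ofReal_le_ofReal ((le_div_iff₀ (Real.Gamma_pos_of_pos (by positivity))).2 ?_)
  calc κ ^ d * Real.Gamma (d / p.toReal + 1)
      ≤ κ ^ d * (d / p.toReal / (κ ^ p.toReal * Real.exp 1)) ^ (d / p.toReal) := by gcongr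
    _ = (d / p.toReal / Real.exp 1) ^ (d / p.toReal) := by
      rw [← rpow_eq, ← Real.mul_rpow (by positivity) (by positivity)]
      congr 1
      field_simp

end LpDensity

section TypicalLpBalls

lemma isTypicalFamily_lpBall {p : ℝ≥0∞} [Fact (1 ≤ p)] (hp : p ≠ ∞) :
    IsTypicalFamily (lpDensity p.toReal) (fun d => lpBall p (Fin d) (lpRadius p.toReal d)) :=
  have one_le : 1 ≤ p.toReal := by simpa using ENNReal.toReal_mono hp (Fact.out : 1 ≤ p)
  { nonneg := fun _ => (Real.exp_pos _).le
    integral_eq_one := integral_lpDensity (one_pos.trans_le one_le)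
    balanced := fun _ => balanced_lpBall _
    one_le_prod := fun _ _ => one_le_prod_lpDensity (one_pos.trans_le one_le)
    eventually_pow_le_volume := fun _ => eventually_pow_le_volume_lpBall one_le }

lemma isTypicalFamily_lpBall_top :
    IsTypicalFamily ((Set.Icc (-(1 / 2)) (1 / 2)).indicator 1)
      (fun d => lpBall ∞ (Fin d) (1 / 2)) where
  nonneg := Set.indicator_nonneg fun _ _ => zero_le_one
  integral_eq_one := by
    rw [integral_indicator_one measurableSet_Icc, Real.volume_real_Icc_of_le (by norm_num)]
    norm_num
  balanced _ := balanced_lpBall _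
  one_le_prod d x hx := by
    rw [lpBall_top (by norm_num)] at hx
    have mem_Icc (i : Fin d) : x i ∈ Set.Icc (-(1 / 2) : ℝ) (1 / 2) := ⟨hx.1 i, hx.2 i⟩
    simp only [Set.indicator_of_mem (mem_Icc _), Pi.one_apply, Finset.prod_const_one, le_refl]
  eventually_pow_le_volume κ hκ₀ hκ₁ := Eventually.of_forall fun d => by
    rw [lpBall_top (by norm_num), Real.volume_Icc_pi]
    norm_num
    exact pow_le_one₀ hκ₀.le hκ₁.le

lemma exists_isTypicalFamily_lpBall (p : ℝ≥0∞) [Fact (1 ≤ p)] :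
    ∃ (f : ℝ → ℝ) (r : ℕ → ℝ), IsTypicalFamily f (fun d => lpBall p (Fin d) (r d)) ∧
      (∀ d, d ≠ 0 → 0 < r d) ∧ ContinuousAt f 0 ∧ f 0 = Real.exp p⁻¹.toReal := by
  rcases eq_or_ne p ∞ with rfl | hp
  · refine ⟨_, _, isTypicalFamily_lpBall_top, fun _ _ => by norm_num, ?_, by simp⟩
    have Icc_mem : Set.Icc (-(1 / 2) : ℝ) (1 / 2) ∈ 𝓝 0 :=
      Icc_mem_nhds (by norm_num) (by norm_num)
    exact (continuousAt_const (y := (1 : ℝ))).congr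
      (eventuallyEq_of_mem Icc_mem fun t ht => (Set.indicator_of_mem ht 1).symm)
  · have hP : 0 < p.toReal := ENNReal.toReal_pos (one_pos.trans_le Fact.out).ne' hp
    exact ⟨_, _, isTypicalFamily_lpBall hp, fun _ => lpRadius_pos hP,
      (continuous_lpDensity hP.le).continuousAt, by
        rw [lpDensity_zero hP.ne', ENNReal.toReal_inv, one_div]⟩

end TypicalLpBalls

theorem volume_ratio_inter_lp_balls_tendsto_zero_general
    (p q : ℝ≥0∞) [Fact (1 ≤ p)] [Fact (1 ≤ q)] (hpq : p ≠ q)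
    (ε ε' : ℕ → ℝ) (hε : ∀ d, 0 < ε d) (hε' : ∀ d, 0 < ε' d)
    (hvol : ∀ d, volume (lpBall p (Fin d) (ε d)) ≤ volume (lpBall q (Fin d) (ε' d))) :
    Tendsto (fun d => volume (lpBall p (Fin d) (ε d) ∩ lpBall q (Fin d) (ε' d)) /
      volume (lpBall q (Fin d) (ε' d))) atTop (𝓝 0) := by
  obtain ⟨f, r, hf, r_pos, f_cont, f_zero⟩ := exists_isTypicalFamily_lpBall p
  obtain ⟨g, s, hg, s_pos, g_cont, g_zero⟩ := exists_isTypicalFamily_lpBall q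
  have hfg : ¬ f =ᵐ[volume] g := by
    refine not_ae_eq_of_continuousAt f_cont g_cont ?_
    rw [f_zero, g_zero, Ne, Real.exp_eq_exp, ENNReal.toReal_eq_toReal_iff' ?_ ?_, inv_inj]
    exacts [hpq, ENNReal.inv_ne_top.2 (one_pos.trans_le Fact.out).ne',
      ENNReal.inv_ne_top.2 (one_pos.trans_le Fact.out).ne']
  have p_ball : ∀ᶠ d in atTop,
      (ε d / r d) • lpBall p (Fin d) (r d) = lpBall p (Fin d) (ε d) := by
    filter_upwards [eventually_ne_atTop 0] with d hd
    rw [← lpBall_mul (div_pos (hε d) (r_pos d hd)), div_mul_cancel₀ _ (r_pos d hd).ne']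
  have q_ball : ∀ᶠ d in atTop,
      (ε' d / s d) • lpBall q (Fin d) (s d) = lpBall q (Fin d) (ε' d) := by
    filter_upwards [eventually_ne_atTop 0] with d hd
    rw [← lpBall_mul (div_pos (hε' d) (s_pos d hd)), div_mul_cancel₀ _ (s_pos d hd).ne']
  refine (hf.tendsto_volume_smul_inter_smul_div hg hfg (a := fun d => ε d / r d)
    (b := fun d => ε' d / s d) ?_ ?_ ?_).congr' ?_
  · filter_upwards [eventually_ne_atTop 0] with d hd using (div_pos (hε d) (r_pos d hd)).le
  · filter_upwards [eventually_ne_atTop 0] with d hd using div_pos (hε' d) (s_pos d hd)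
  · filter_upwards [p_ball, q_ball] with d hp hq using by simpa only [hp, hq] using hvol d
  · filter_upwards [p_ball, q_ball] with d hp hq using by rw [hp, hq]

/-- Fix `1 ≤ p < q ≤ ∞` (so in particular `p ≠ q`). If for every dimension `d`
the radii `ε d, ε' d > 0` are chosen so that the Lebesgue volume of the `ℓ_p` ball
`B_{p,d}(ε d)` equals the Lebesgue volume of the `ℓ_q` ball `B_{q,d}(ε' d)`, then
`Vol(B_{p,d}(ε d) ∩ B_{q,d}(ε' d)) / Vol(B_{q,d}(ε' d)) → 0` as `d → ∞`. -/
theorem volume_ratio_inter_lp_balls_tendsto_zero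
    (p q : ℝ≥0∞) [Fact (1 ≤ p)] [Fact (1 ≤ q)] (hpq : p < q)
    (ε ε' : ℕ → ℝ) (hε : ∀ d, 0 < ε d) (hε' : ∀ d, 0 < ε' d)
    (hvol : ∀ d, volume {x : Fin d → ℝ | ‖(WithLp.equiv p (Fin d → ℝ)).symm x‖ ≤ ε d}
      = volume {x : Fin d → ℝ | ‖(WithLp.equiv q (Fin d → ℝ)).symm x‖ ≤ ε' d}) :
    Tendsto (fun d : ℕ =>
      volume ({x : Fin d → ℝ | ‖(WithLp.equiv p (Fin d → ℝ)).symm x‖ ≤ ε d}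
          ∩ {x : Fin d → ℝ | ‖(WithLp.equiv q (Fin d → ℝ)).symm x‖ ≤ ε' d})
        / volume {x : Fin d → ℝ | ‖(WithLp.equiv q (Fin d → ℝ)).symm x‖ ≤ ε' d})
      atTop (nhds 0) := by
  exact volume_ratio_inter_lp_balls_tendsto_zero_general p q hpq.ne ε ε' hε hε' fun d => (hvol d).le
end
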